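/- arXiv:2306.01871 — 2 statements merged into one kernel-verified Lean document; each statement's English description precedes it below -/
import Mathlib

section
/- Let n ≥ 1, let S̄ ⊆ ℝⁿ be a nonempty compact set, let b, F, G : ℝⁿ → ℝ be continuous, let k > 0 and let u ∈ ℝ be a constant control. Let t_k < t_{k+1} and let x : [t_k, t_{k+1}] → ℝ^n be a trajectory such that x(t) ∈ S̄ for all t ∈ [t_k, t_{k+1}] and t ↦ b(x(t)) is differentiable with derivative d/dt b(x(t)) = F(x(t)) + G(x(t))·u. Define b_f^min := min_{y ∈ S̄} F(y), b_γ^min := min_{y ∈ S̄} k·b(y), and b_g^min := min_{y ∈ S̄} G(y) if u ≥ 0 and b_g^min := max_{y ∈ S̄} G(y) if u < 0. If b(x(t_k)) ≥ 0 and the event-triggered condition b_f^min + b_g^min·u + b_γ^min ≥ 0 holds, then b(x(t)) ≥ 0 for all t ∈ [t_k, t_{k+1}]. -/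
/-!
On the image of the trajectory the worst-case condition bounds the pointwise expression
`F y + G y * u + k * b y` from below by `0`, so `h t = b (x t)` satisfies `h' ≥ -k h`. Grönwall's
inequality, applied to `-h`, gives `h t ≥ exp (-k (t - tₖ)) h tₖ ≥ 0`.
-/

open Set

section WorstCase

variable {X : Type*} {S : Set X} {G : X → ℝ} {u : ℝ}

/-- The coefficient `b_g^min` of the control `u` in the worst-case barrier condition over `S`: the
value of `G` on `S` that makes `G y * u` smallest, so an infimum or a supremum according to the sign
of `u`. It is meaningful only if `G` is bounded on `S` on the corresponding side. -/
noncomputable def worstCaseGain (G : X → ℝ) (S : Set X) (u : ℝ) : ℝ :=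
  if 0 ≤ u then sInf (G '' S) else sSup (G '' S)

theorem worstCaseGain_mul_le (hG_below : 0 ≤ u → BddBelow (G '' S))
    (hG_above : u < 0 → BddAbove (G '' S)) {y : X} (hy : y ∈ S) :
    worstCaseGain G S u * u ≤ G y * u := by
  have hGy : G y ∈ G '' S := mem_image_of_mem G hy
  rw [worstCaseGain]
  split_ifs with hu
  · exact mul_le_mul_of_nonneg_right (csInf_le (hG_below hu) hGy) hu
  · have hu_neg : u < 0 := not_le.mp hu
    exact mul_le_mul_of_nonpos_right (le_csSup (hG_above hu_neg) hGy) hu_neg.le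

theorem sInf_add_worstCaseGain_mul_add_sInf_le {F c : X → ℝ} (hF : BddBelow (F '' S))
    (hG_below : 0 ≤ u → BddBelow (G '' S)) (hG_above : u < 0 → BddAbove (G '' S))
    (hc : BddBelow (c '' S)) {y : X} (hy : y ∈ S) :
    sInf (F '' S) + worstCaseGain G S u * u + sInf (c '' S) ≤ F y + G y * u + c y :=
  add_le_add
    (add_le_add (csInf_le hF (mem_image_of_mem F hy)) (worstCaseGain_mul_le hG_below hG_above hy))
    (csInf_le hc (mem_image_of_mem c hy))

end WorstCase

theorem mul_exp_le_of_mul_le_deriv_right {f f' : ℝ → ℝ} {K a b : ℝ}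
    (hf : ContinuousOn f (Icc a b)) (hf' : ∀ t ∈ Ico a b, HasDerivWithinAt f (f' t) (Ici t) t)
    (bound : ∀ t ∈ Ico a b, K * f t ≤ f' t) :
    ∀ t ∈ Icc a b, f a * Real.exp (K * (t - a)) ≤ f t := by
  intro t ht
  have neg_le : -f t ≤ gronwallBound (-f a) K 0 (t - a) := by
    refine le_gronwallBound_of_liminf_deriv_right_le (f := fun s => -f s)
      (f' := fun s => -f' s) hf.fun_neg
      (fun s hs r hr => (hf' s hs).fun_neg.liminf_right_slope_le hr) le_rfl (fun s hs => ?_) t ht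
    linarith [bound s hs]
  rw [gronwallBound_ε0] at neg_le
  linarith

theorem stmt_8_general {X : Type*} {S : Set X} {b F G : X → ℝ} {k u tk tk1 : ℝ} {x : ℝ → X}
    (hF : BddBelow (F '' S)) (hG_below : 0 ≤ u → BddBelow (G '' S))
    (hG_above : u < 0 → BddAbove (G '' S)) (hb : BddBelow ((fun y => k * b y) '' S))
    (hx : ∀ t ∈ Ico tk tk1, x t ∈ S) (hcont : ContinuousOn (fun s => b (x s)) (Icc tk tk1))
    (hderiv : ∀ t ∈ Ico tk tk1,
      HasDerivWithinAt (fun s => b (x s)) (F (x t) + G (x t) * u) (Ici t) t)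
    (h0 : 0 ≤ b (x tk))
    (hcond : 0 ≤ sInf (F '' S) + worstCaseGain G S u * u + sInf ((fun y => k * b y) '' S)) :
    ∀ t ∈ Icc tk tk1, 0 ≤ b (x t) := by
  have barrier : ∀ t ∈ Ico tk tk1, -k * b (x t) ≤ F (x t) + G (x t) * u := by
    intro t ht
    have pointwise : 0 ≤ F (x t) + G (x t) * u + k * b (x t) :=
      hcond.trans (sInf_add_worstCaseGain_mul_add_sInf_le hF hG_below hG_above hb (hx t ht))
    linarith
  intro t ht
  calc
    0 ≤ b (x tk) * Real.exp (-k * (t - tk)) := mul_nonneg h0 (Real.exp_pos _).le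
    _ ≤ b (x t) := mul_exp_le_of_mul_le_deriv_right hcont hderiv barrier t ht

/-- Event-triggered CBF scheme (Theorem 1 with linear class-K function):
if the worst-case CBF condition over the compact set `S̄` holds for the constant
control `u` and `b(x(t_k)) ≥ 0`, then `b(x(t)) ≥ 0` on the inter-event interval. -/
theorem stmt_8 (n : ℕ) (hn : 1 ≤ n) (Sbar : Set (Fin n → ℝ))
    (hne : Sbar.Nonempty) (hcpt : IsCompact Sbar)
    (b F G : (Fin n → ℝ) → ℝ)
    (hb : Continuous b) (hF : Continuous F) (hG : Continuous G)
    (k u : ℝ) (hk : 0 < k)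
    (tk tk1 : ℝ) (ht : tk < tk1)
    (x : ℝ → (Fin n → ℝ))
    (hx : ∀ t ∈ Set.Icc tk tk1, x t ∈ Sbar)
    (hderiv : ∀ t ∈ Set.Icc tk tk1,
      HasDerivAt (fun s => b (x s)) (F (x t) + G (x t) * u) t)
    (bfmin bγmin bgmin : ℝ)
    (hbf : bfmin = sInf (F '' Sbar))
    (hbγ : bγmin = sInf ((fun y => k * b y) '' Sbar))
    (hbg : bgmin = if 0 ≤ u then sInf (G '' Sbar) else sSup (G '' Sbar))
    (h0 : 0 ≤ b (x tk))
    (hcond : bfmin + bgmin * u + bγmin ≥ 0) :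
    ∀ t ∈ Set.Icc tk tk1, 0 ≤ b (x t) := by
  subst hbf hbγ hbg
  exact stmt_8_general (hcpt.image hF).bddBelow (fun _ => (hcpt.image hG).bddBelow)
    (fun _ => (hcpt.image hG).bddAbove) (hcpt.image (continuous_const.mul hb)).bddBelow
    (fun t ht => hx t (Ico_subset_Icc_self ht)) (HasDerivAt.continuousOn hderiv)
    (fun t ht => (hderiv t (Ico_subset_Icc_self ht)).hasDerivWithinAt) h0 hcond
end

section
/- Let t_k < t_{k+1}, let x_i, x_c : ℝ → ℝ be twice differentiable on [t_k, t_{k+1}] with velocities v_i = x_i', v_c = x_c', suppose the control of CAV i is constant on the interval: v_i'(t) = u_i for all t ∈ [t_k, t_{k+1}], and let φ > 0, δ > 0, L > 0, k₂ > 0 and box half-widths s_x ≥ 0, s_v ≥ 0 with x_i(t_k) − s_x ≥ 0 and v_i(t_k) − s_v ≥ 0. Assume: (i) |x_i(t) − x_i(t_k)| ≤ s_x, |v_i(t) − v_i(t_k)| ≤ s_v, |x_c(t) − x_c(t_k)| ≤ s_x and |v_c(t) − v_c(t_k)| ≤ s_v for all t in the interval; (ii) x_c(t_k) − x_i(t_k)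 − (φ·x_i(t_k)/L)·v_i(t_k) − δ ≥ 0; and (iii) the event-triggered condition ( v_c(t_k) − s_v ) − ( v_i(t_k) + s_v ) − (φ/L)·( v_i(t_k) + s_v )² + m·u_i + k₂·( (x_c(t_k) − s_x) − (x_i(t_k) + s_x) − (φ/L)·(x_i(t_k) + s_x)·(v_i(t_k) + s_v) − δ ) ≥ 0, where m := −(φ/L)·(x_i(t_k) + s_x) if u_i ≥ 0 and m := −(φ/L)·(x_i(t_k) − s_x) if u_i < 0. Then the safe-merging barrier b₂(t) = x_c(t) − x_i(t) − (φ·x_i(t)/L)·v_i(t) − δ satisfies b₂(t) ≥ 0 for all t ∈ [t_k, t_{k+1}]. -/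
/-!
Along a trajectory the barrier `b` satisfies `b' = L_f b + (L_g b) u`. Each term of
`L_f b + (L_g b) u + k₂ b` is bounded below over the box by its value at the worst corner, so the
event-triggered condition yields `b' + k₂ b ≥ 0`, and Grönwall's inequality propagates `b ≥ 0`.
The products `x_i v_i` and `v_i²` are controlled through `|x_i| ≤ x_i(t_k) + s_x` and
`|v_i| ≤ v_i(t_k) + s_v`, which hold on any box with nonnegative centre, even one crossing zero.
-/

open Set

/-- The safe-merging barrier `b₂` as a function of the state: `x`, `v` are the position and
velocity of the controlled vehicle, `y` is the position of its conflict vehicle, and `c` stands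
for the ratio `φ / L`. -/
def mergingBarrier (c δ x v y : ℝ) : ℝ := y - x - c * x * v - δ

/-- The drift `L_f b₂` of the safe-merging barrier, i.e. the control-free part of its rate of
change; `v`, `w` are the velocities of the controlled vehicle and of its conflict vehicle. -/
def mergingDrift (c v w : ℝ) : ℝ := w - v - c * v ^ 2

/-- The value of the control coefficient `L_g b₂ = -c * x`, over positions within `s` of `x₀`,
that is worst for the control `u`: its minimum if `u ≥ 0`, its maximum if `u < 0`. -/
noncomputable def worstControlCoeff (c x₀ s u : ℝ) : ℝ :=
  if 0 ≤ u then -c * (x₀ + s) else -c * (x₀ - s)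

theorem nonneg_of_deriv_right_add_mul_nonneg {b b' : ℝ → ℝ} {k t₀ t₁ : ℝ}
    (hb : ContinuousOn b (Icc t₀ t₁))
    (hb' : ∀ t ∈ Ico t₀ t₁, HasDerivWithinAt b (b' t) (Ici t) t)
    (h₀ : 0 ≤ b t₀) (h : ∀ t ∈ Ico t₀ t₁, 0 ≤ b' t + k * b t) :
    ∀ t ∈ Icc t₀ t₁, 0 ≤ b t := by
  intro t ht
  have hbound : -b t ≤ gronwallBound 0 (-k) 0 (t - t₀) :=
    le_gronwallBound_of_liminf_deriv_right_le hb.neg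
      (fun s hs _ hr ↦ (hb' s hs).neg.liminf_right_slope_le hr)
      (neg_nonpos.2 h₀) (fun s hs ↦ by simp only [Pi.neg_apply]; linarith [h s hs]) t ht
  rwa [gronwallBound_ε0_δ0, neg_nonpos] at hbound

theorem hasDerivWithinAt_mergingBarrier {c δ u w t : ℝ} {x v y : ℝ → ℝ} {s : Set ℝ}
    (hx : HasDerivWithinAt x (v t) s t) (hv : HasDerivWithinAt v u s t)
    (hy : HasDerivWithinAt y w s t) :
    HasDerivWithinAt (fun τ ↦ mergingBarrier c δ (x τ) (v τ) (y τ))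
      (mergingDrift c (v t) w + -c * x t * u) s t := by
  refine (((hy.sub hx).sub ((hx.const_mul c).mul hv)).sub_const δ).congr_deriv ?_
  simp only [mergingDrift]
  ring

theorem abs_le_add_of_abs_sub_le {x x₀ s : ℝ} (hx₀ : 0 ≤ x₀) (hx : |x - x₀| ≤ s) :
    |x| ≤ x₀ + s := by
  linarith [abs_sub_abs_le_abs_sub x x₀, abs_of_nonneg hx₀]

theorem mergingBarrier_le_of_abs_le {c δ x X v V y Y : ℝ} (hc : 0 ≤ c)
    (hx : |x| ≤ X) (hv : |v| ≤ V) (hy : Y ≤ y) :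
    mergingBarrier c δ X V Y ≤ mergingBarrier c δ x v y := by
  have hxv : x * v ≤ X * V :=
    calc x * v ≤ |x| * |v| := (le_abs_self _).trans_eq (abs_mul x v)
      _ ≤ X * V := mul_le_mul hx hv (abs_nonneg v) ((abs_nonneg x).trans hx)
  have hcxv : c * (x * v) ≤ c * (X * V) := by gcongr
  simp only [mergingBarrier, mul_assoc]
  linarith [le_of_abs_le hx]

theorem mergingDrift_le_of_abs_le {c v V w W : ℝ} (hc : 0 ≤ c) (hv : |v| ≤ V) (hw : W ≤ w) :
    mergingDrift c V W ≤ mergingDrift c v w := by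
  have hsq : v ^ 2 ≤ V ^ 2 := sq_le_sq' (neg_le_of_abs_le hv) (le_of_abs_le hv)
  have hcsq : c * v ^ 2 ≤ c * V ^ 2 := by gcongr
  simp only [mergingDrift]
  linarith [le_of_abs_le hv]

theorem worstControlCoeff_mul_le {c x x₀ s u : ℝ} (hc : 0 ≤ c) (hx : |x - x₀| ≤ s) :
    worstControlCoeff c x₀ s u * u ≤ -c * x * u := by
  obtain ⟨hlower, hupper⟩ := abs_sub_le_iff.1 hx
  unfold worstControlCoeff
  split_ifs with hu
  · exact mul_le_mul_of_nonneg_right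
      (mul_le_mul_of_nonpos_left (by linarith) (neg_nonpos.2 hc)) hu
  · exact mul_le_mul_of_nonpos_right
      (mul_le_mul_of_nonpos_left (by linarith) (neg_nonpos.2 hc)) (not_le.1 hu).le

theorem stmt_10_general {tk tk1 c δ k₂ sx sv ui : ℝ} {xi xc vi vc : ℝ → ℝ}
    (hc : 0 ≤ c) (hk₂ : 0 ≤ k₂) (hxi₀ : 0 ≤ xi tk) (hvi₀ : 0 ≤ vi tk)
    (hxi : ∀ t ∈ Icc tk tk1, HasDerivWithinAt xi (vi t) (Icc tk tk1) t)
    (hxc : ∀ t ∈ Icc tk tk1, HasDerivWithinAt xc (vc t) (Icc tk tk1) t)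
    (hvi : ∀ t ∈ Icc tk tk1, HasDerivWithinAt vi ui (Icc tk tk1) t)
    (hboxxi : ∀ t ∈ Icc tk tk1, |xi t - xi tk| ≤ sx)
    (hboxvi : ∀ t ∈ Icc tk tk1, |vi t - vi tk| ≤ sv)
    (hboxxc : ∀ t ∈ Icc tk tk1, xc tk - sx ≤ xc t)
    (hboxvc : ∀ t ∈ Icc tk tk1, vc tk - sv ≤ vc t)
    (h0 : 0 ≤ mergingBarrier c δ (xi tk) (vi tk) (xc tk))
    (hcond : 0 ≤ mergingDrift c (vi tk + sv) (vc tk - sv)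
      + worstControlCoeff c (xi tk) sx ui * ui
      + k₂ * mergingBarrier c δ (xi tk + sx) (vi tk + sv) (xc tk - sx)) :
    ∀ t ∈ Icc tk tk1, 0 ≤ mergingBarrier c δ (xi t) (vi t) (xc t) := by
  have hderiv (t) (ht : t ∈ Icc tk tk1) :=
    hasDerivWithinAt_mergingBarrier (c := c) (δ := δ) (hxi t ht) (hvi t ht) (hxc t ht)
  refine nonneg_of_deriv_right_add_mul_nonneg (k := k₂)
    (fun t ht ↦ (hderiv t ht).continuousWithinAt)
    (fun t ht ↦ (hderiv t (Ico_subset_Icc_self ht)).mono_of_mem_nhdsWithin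
      (Icc_mem_nhdsGE_of_mem ht)) h0 fun t hIco ↦ hcond.trans ?_
  have ht := Ico_subset_Icc_self hIco
  have hx := abs_le_add_of_abs_sub_le hxi₀ (hboxxi t ht)
  have hv := abs_le_add_of_abs_sub_le hvi₀ (hboxvi t ht)
  gcongr ?_ + ?_ + k₂ * ?_
  · exact mergingDrift_le_of_abs_le hc hv (hboxvc t ht)
  · exact worstControlCoeff_mul_le hc (hboxxi t ht)
  · exact mergingBarrier_le_of_abs_le hc hx hv (hboxxc t ht)

/-- Event-triggered safe merging: under the worst-case (event-triggered)
merging CBF condition with sign-dependent control coefficient `m`, the safe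
merging barrier remains nonnegative on the inter-event interval. -/
theorem stmt_10 (tk tk1 : ℝ) (ht : tk < tk1)
    (xi xc vi vc : ℝ → ℝ) (ui : ℝ) (φ δ L k₂ sx sv : ℝ)
    (hφ : 0 < φ) (hδ : 0 < δ) (hL : 0 < L) (hk₂ : 0 < k₂)
    (hsx : 0 ≤ sx) (hsv : 0 ≤ sv)
    (hxpos : xi tk - sx ≥ 0) (hvpos : vi tk - sv ≥ 0)
    (hxi : ∀ t ∈ Set.Icc tk tk1, HasDerivAt xi (vi t) t)
    (hxc : ∀ t ∈ Set.Icc tk tk1, HasDerivAt xc (vc t) t)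
    (hvi : ∀ t ∈ Set.Icc tk tk1, HasDerivAt vi ui t)
    (hboxxi : ∀ t ∈ Set.Icc tk tk1, |xi t - xi tk| ≤ sx)
    (hboxvi : ∀ t ∈ Set.Icc tk tk1, |vi t - vi tk| ≤ sv)
    (hboxxc : ∀ t ∈ Set.Icc tk tk1, |xc t - xc tk| ≤ sx)
    (hboxvc : ∀ t ∈ Set.Icc tk tk1, |vc t - vc tk| ≤ sv)
    (h0 : xc tk - xi tk - (φ * xi tk / L) * vi tk - δ ≥ 0)
    (m : ℝ)
    (hm : m = if 0 ≤ ui then -(φ / L) * (xi tk + sx) else -(φ / L) * (xi tk - sx))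
    (hcond : (vc tk - sv) - (vi tk + sv) - (φ / L) * (vi tk + sv) ^ 2 + m * ui
      + k₂ * ((xc tk - sx) - (xi tk + sx)
        - (φ / L) * (xi tk + sx) * (vi tk + sv) - δ) ≥ 0) :
    ∀ t ∈ Set.Icc tk tk1, xc t - xi t - (φ * xi t / L) * vi t - δ ≥ 0 := by
  subst hm
  simp only [mul_div_right_comm φ] at h0 ⊢
  exact stmt_10_general (div_pos hφ hL).le hk₂.le (by linarith) (by linarith)
    (fun t ht ↦ (hxi t ht).hasDerivWithinAt) (fun t ht ↦ (hxc t ht).hasDerivWithinAt)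
    (fun t ht ↦ (hvi t ht).hasDerivWithinAt) hboxxi hboxvi
    (fun t ht ↦ sub_le_of_abs_sub_le_left (hboxxc t ht))
    (fun t ht ↦ sub_le_of_abs_sub_le_left (hboxvc t ht)) h0 hcond
end
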